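/- (Hardy–Ramanujan asymptotic for the partition function.) As n → ∞, p(n) ∼ e^{π√(2n/3)}/(4n√3); that is, the sequence p(n) · 4n√3 / exp(π·√(2n/3)) tends to 1 as n → ∞. -/

import Mathlib

/-- `p n` is the classical partition function: the number of partitions of `n`. -/
def p (n : ℕ) : ℕ := Fintype.card (Nat.Partition n)

/-!
The generating function of the partition numbers is `1 / φ(q)` with `φ(q) = ∏ (1 - q ^ n)`, so
`p n` is a Cauchy integral over the circle `|q| = exp (-C / √n)`, with `C = π / √6`. The modular
transformation of the Dedekind eta function gives
`1 / φ(exp (-z)) ≈ √(z / (2 * π)) * exp (π ^ 2 / (6 * z))` as `z → 0`, and `C / √n` is the saddle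
point of `π ^ 2 / (6 * z) + n * z`: after rescaling, the integrand tends pointwise to a Gaussian.
Instead of separating major and minor arcs, the factorwise inequality
`|1 - w| ≥ (1 - |w|) * exp (|w| - re w)` bounds `1 / φ(q)` on the whole circle by an integrable
function of the rescaled angle, and dominated convergence applies.
-/

open Filter Topology Complex MeasureTheory PowerSeries
open scoped Real PowerSeries.WithPiTopology

section PowerSeriesSum

variable {R : Type*}

/-- The power series `f` converges absolutely at `q`, with sum `v`. -/
def HasAbsSumAt [NormedCommRing R] (f : R⟦X⟧) (q v : R) : Prop :=
  (Summable fun n => ‖coeff n f * q ^ n‖) ∧ HasSum (fun n => coeff n f * q ^ n) v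

theorem HasAbsSumAt.one [NormedCommRing R] (q : R) : HasAbsSumAt (1 : R⟦X⟧) q 1 := by
  have hzero : ∀ n ≠ 0, coeff n (1 : R⟦X⟧) * q ^ n = 0 := fun n hn => by simp [coeff_one, hn]
  refine ⟨summable_of_ne_finset_zero (s := {0}) fun n hn => ?_, ?_⟩
  · rw [hzero n (by simpa using hn), norm_zero]
  · simpa using hasSum_single 0 hzero

theorem HasAbsSumAt.mul [NormedCommRing R] [CompleteSpace R] {f g : R⟦X⟧} {q v w : R}
    (hf : HasAbsSumAt f q v) (hg : HasAbsSumAt g q w) : HasAbsSumAt (f * g) q (v * w) := by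
  have hcoeff (n : ℕ) : coeff n (f * g) * q ^ n =
      ∑ kl ∈ Finset.HasAntidiagonal.antidiagonal n,
        (coeff kl.1 f * q ^ kl.1) * (coeff kl.2 g * q ^ kl.2) := by
    rw [coeff_mul, Finset.sum_mul]
    refine Finset.sum_congr rfl fun kl hkl => ?_
    rw [← Finset.HasAntidiagonal.mem_antidiagonal.mp hkl, pow_add]
    ring
  have hnorm : Summable fun n => ‖coeff n (f * g) * q ^ n‖ := by
    simpa only [hcoeff] using summable_norm_sum_mul_antidiagonal_of_summable_norm hf.1 hg.1
  refine ⟨hnorm, hnorm.of_norm.hasSum_iff.mpr ?_⟩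
  simp only [hcoeff]
  rw [← tsum_mul_tsum_eq_tsum_sum_antidiagonal_of_summable_norm hf.1 hg.1,
    hf.2.tsum_eq, hg.2.tsum_eq]

theorem HasAbsSumAt.finsetProd [NormedCommRing R] [CompleteSpace R] {ι : Type*} {s : Finset ι}
    {f : ι → R⟦X⟧} {q : R} {v : ι → R} (h : ∀ i ∈ s, HasAbsSumAt (f i) q (v i)) :
    HasAbsSumAt (∏ i ∈ s, f i) q (∏ i ∈ s, v i) := by
  classical
  induction s using Finset.induction_on with
  | empty => simpa using HasAbsSumAt.one q
  | insert i s hi ih =>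
    rw [Finset.prod_insert hi, Finset.prod_insert hi]
    exact (h i (Finset.mem_insert_self i s)).mul
      (ih fun j hj => h j (Finset.mem_insert_of_mem hj))

theorem coeff_tsum_X_pow_mul [CommSemiring R] [TopologicalSpace R] [IsTopologicalSemiring R]
    [T2Space R] {i : ℕ} (hi : i ≠ 0) (n : ℕ) :
    coeff n (∑' j : ℕ, (X : R⟦X⟧) ^ (i * j)) = if i ∣ n then 1 else 0 := by
  have hsum : Summable fun j : ℕ => (X : R⟦X⟧) ^ (i * j) := by
    simpa only [pow_mul] using
      WithPiTopology.summable_pow_of_constantCoeff_eq_zero (f := (X : R⟦X⟧) ^ i) (by simp [hi])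
  rw [hsum.map_tsum _ (WithPiTopology.continuous_coeff R n)]
  simp only [coeff_X_pow]
  split_ifs with hdvd
  · obtain ⟨k, rfl⟩ := hdvd
    simp [hi]
  · simp [show ∀ j, n ≠ i * j from fun j hj => hdvd ⟨j, hj⟩]

theorem hasAbsSumAt_tsum_X_pow_mul [NormedField R] {q : R} (hq : ‖q‖ < 1) {i : ℕ} (hi : i ≠ 0) :
    HasAbsSumAt (∑' j : ℕ, (X : R⟦X⟧) ^ (i * j)) q (1 - q ^ i)⁻¹ := by
  have hinj : Function.Injective (i * · : ℕ → ℕ) := mul_right_injective₀ hi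
  constructor
  · refine Summable.of_nonneg_of_le (fun _ => norm_nonneg _) (fun n => ?_)
      (summable_geometric_of_lt_one (norm_nonneg q) hq)
    rw [coeff_tsum_X_pow_mul hi, norm_mul, norm_pow]
    split_ifs <;> simp
  · rw [← hinj.hasSum_iff]
    · have hqi : ‖q ^ i‖ < 1 := by
        rw [norm_pow]; exact pow_lt_one₀ (norm_nonneg q) hq hi
      have hgeom : (fun n => coeff n (∑' j : ℕ, (X : R⟦X⟧) ^ (i * j)) * q ^ n) ∘ (i * ·) =
          fun j => (q ^ i) ^ j := by
        funext j
        rw [Function.comp_apply, coeff_tsum_X_pow_mul hi, if_pos (dvd_mul_right i j), one_mul,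
          pow_mul]
      rw [hgeom]
      exact hasSum_geometric_of_norm_lt_one hqi
    · intro n hn
      rw [coeff_tsum_X_pow_mul hi, if_neg (fun ⟨k, hk⟩ => hn ⟨k, hk.symm⟩), zero_mul]

end PowerSeriesSum

section GeneratingFunction

theorem card_restricted_le (n : ℕ) (P : ℕ → Prop) [DecidablePred P] :
    (Nat.Partition.restricted n P).card ≤ p n :=
  Finset.card_le_univ _

theorem card_restricted_le_eq {n K : ℕ} (h : n ≤ K) :
    (Nat.Partition.restricted n (· ≤ K)).card = p n := by
  rw [Nat.Partition.restricted, Finset.filter_true_of_mem, p, Finset.card_univ]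
  exact fun _ _ _ hi => (Nat.Partition.le_of_mem_parts hi).trans h

theorem hasAbsSumAt_card_restricted_le {R : Type*} [NormedField R] [CompleteSpace R] {q : R}
    (hq : ‖q‖ < 1) (K : ℕ) :
    HasAbsSumAt (.mk fun n => ((Nat.Partition.restricted n (· ≤ K)).card : R)) q
      (∏ i ∈ Finset.range K, (1 - q ^ (i + 1)))⁻¹ := by
  have hprod := hasProd_prod_of_ne_finset_one (L := .unconditional ℕ) (s := Finset.range K)
    (f := fun i => if i + 1 ≤ K then ∑' j : ℕ, (X : R⟦X⟧) ^ ((i + 1) * j) else 1)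
    (fun i hi => if_neg (by simpa using hi))
  rw [(Nat.Partition.hasProd_powerSeriesMk_card_restricted R (· ≤ K)).unique hprod,
    ← Finset.prod_inv_distrib]
  refine HasAbsSumAt.finsetProd fun i hi => ?_
  rw [if_pos (Nat.succ_le_of_lt (Finset.mem_range.mp hi))]
  exact hasAbsSumAt_tsum_X_pow_mul hq i.succ_ne_zero

/-- Euler's function `φ(q) = ∏ (1 - qⁿ)`, `n ≥ 1`, whose inverse generates the partition numbers. -/
noncomputable def eulerFunction (q : ℂ) : ℂ := ∏' n : ℕ, (1 - q ^ (n + 1))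

theorem tendsto_prod_one_sub_pow {q : ℂ} (hq : ‖q‖ < 1) :
    Tendsto (fun K => ∏ i ∈ Finset.range K, (1 - q ^ (i + 1))) atTop (𝓝 (eulerFunction q)) :=
  (ModularForm.multipliable_one_sub_pow hq).hasProd.tendsto_prod_nat

theorem eulerFunction_zero : eulerFunction 0 = 1 := by simp [eulerFunction]

theorem norm_pow_succ_lt_one {q : ℂ} (hq : ‖q‖ < 1) (n : ℕ) : ‖q ^ (n + 1)‖ < 1 := by
  rw [norm_pow]
  exact pow_lt_one₀ (norm_nonneg q) hq n.succ_ne_zero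

theorem eulerFunction_ne_zero {q : ℂ} (hq : ‖q‖ < 1) : eulerFunction q ≠ 0 := by
  refine tprod_one_add_ne_zero_of_summable (f := fun n : ℕ ↦ -q ^ (n + 1)) (fun i hi => ?_) ?_
  · have hone : q ^ (i + 1) = 1 := by linear_combination -hi
    simpa [hone] using norm_pow_succ_lt_one hq i
  · simpa using (summable_nat_add_iff 1).mpr (summable_geometric_of_lt_one (norm_nonneg q) hq)

theorem continuousAt_eulerFunction {q : ℂ} (hq : ‖q‖ < 1) : ContinuousAt eulerFunction q :=
  (ModularForm.differentiableOn_tprod_one_sub_pow.differentiableAt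
    (Metric.isOpen_ball.mem_nhds (by simpa using hq))).continuousAt

theorem tendsto_inv_prod_one_sub_pow {q : ℂ} (hq : ‖q‖ < 1) :
    Tendsto (fun K => (∏ i ∈ Finset.range K, (1 - q ^ (i + 1)))⁻¹) atTop
      (𝓝 (eulerFunction q)⁻¹) :=
  (tendsto_prod_one_sub_pow hq).inv₀ (eulerFunction_ne_zero hq)

theorem summable_p {r : ℝ} (hr₀ : 0 ≤ r) (hr : r < 1) : Summable fun n => (p n : ℝ) * r ^ n := by
  have hnorm : ‖r‖ < 1 := by rwa [Real.norm_of_nonneg hr₀]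
  obtain ⟨B, hB⟩ :=
    (tendsto_inv_prod_one_sub_pow (q := r) (by rwa [norm_real])).norm.bddAbove_range
  refine summable_of_sum_range_le (c := B) (fun n => by positivity) fun N => ?_
  obtain ⟨-, hsum⟩ := hasAbsSumAt_card_restricted_le hnorm N
  simp only [coeff_mk] at hsum
  calc ∑ n ∈ Finset.range N, (p n : ℝ) * r ^ n
      = ∑ n ∈ Finset.range N, ((Nat.Partition.restricted n (· ≤ N)).card : ℝ) * r ^ n :=
        Finset.sum_congr rfl fun n hn => by
          rw [card_restricted_le_eq (Finset.mem_range.mp hn).le]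
    _ ≤ (∏ i ∈ Finset.range N, (1 - r ^ (i + 1)))⁻¹ :=
        sum_le_hasSum _ (fun n _ => by positivity) hsum
    _ ≤ ‖(∏ i ∈ Finset.range N, (1 - (r : ℂ) ^ (i + 1)))⁻¹‖ := by
        exact_mod_cast (le_abs_self _).trans (norm_real _).ge
    _ ≤ B := hB ⟨N, rfl⟩

theorem hasSum_p {q : ℂ} (hq : ‖q‖ < 1) :
    HasSum (fun n => (p n : ℂ) * q ^ n) (eulerFunction q)⁻¹ := by
  have hnorm := summable_p (norm_nonneg q) hq
  have hsum : Summable fun n => (p n : ℂ) * q ^ n := .of_norm (by simpa using hnorm)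
  have hlim := tendsto_tsum_of_dominated_convergence (𝓕 := atTop)
    (f := fun K n => ((Nat.Partition.restricted n (· ≤ K)).card : ℂ) * q ^ n)
    (g := fun n => (p n : ℂ) * q ^ n) hnorm
    (fun n => tendsto_const_nhds.congr' <| by
      filter_upwards [eventually_ge_atTop n] with K hK
      rw [card_restricted_le_eq hK])
    (.of_forall fun K n => by
      rw [norm_mul, norm_pow, norm_natCast]
      gcongr
      exact card_restricted_le n _)
  have hpartial (K : ℕ) := (hasAbsSumAt_card_restricted_le hq K).2.tsum_eq
  simp only [coeff_mk] at hpartial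
  simp only [hpartial] at hlim
  rw [← tendsto_nhds_unique hlim (tendsto_inv_prod_one_sub_pow hq)]
  exact hsum.hasSum

end GeneratingFunction

section EulerFunctionBound

theorem re_pow_le_norm_pow (w : ℂ) (n : ℕ) : (w ^ n).re ≤ ‖w‖ ^ n :=
  (re_le_norm _).trans (norm_pow w n).le

theorem norm_one_sub_ofReal {r : ℝ} (hr : r < 1) : ‖1 - (r : ℂ)‖ = 1 - r := by
  rw [← ofReal_one, ← ofReal_sub, norm_real, Real.norm_of_nonneg (by linarith)]

-- Every term of the series `∑ (‖w‖ ^ k - re (w ^ k)) / k` for `log (‖1 - w‖ / (1 - ‖w‖))` is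
-- nonnegative; the estimate keeps the term `k = 1`.
theorem one_sub_norm_mul_exp_le {w : ℂ} (hw : ‖w‖ < 1) :
    (1 - ‖w‖) * Real.exp (‖w‖ - w.re) ≤ ‖1 - w‖ := by
  have hpos : 0 < 1 - ‖w‖ := by linarith
  have hseries := (hasSum_re (hasSum_taylorSeries_neg_log (z := (‖w‖ : ℂ)) (by simpa using hw))).sub
    (hasSum_re (hasSum_taylorSeries_neg_log hw))
  simp only [neg_re, log_re, norm_one_sub_ofReal hw, ← ofReal_pow, div_natCast_re, ofReal_re,
    ← sub_div] at hseries
  have hfirst := le_hasSum hseries 1 fun n _ =>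
    div_nonneg (sub_nonneg.mpr (re_pow_le_norm_pow w n)) n.cast_nonneg
  simp only [pow_one, Nat.cast_one, div_one] at hfirst
  rw [← Real.log_le_log_iff (by positivity) (hpos.trans_le (by simpa using norm_sub_norm_le 1 w)),
    Real.log_mul hpos.ne' (Real.exp_ne_zero _), Real.log_exp]
  linarith

theorem hasSum_norm_pow_sub_re_pow {q : ℂ} (hq : ‖q‖ < 1) :
    HasSum (fun n : ℕ => ‖q ^ (n + 1)‖ - (q ^ (n + 1)).re) ((1 - ‖q‖)⁻¹ - (1 - q)⁻¹.re) := by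
  have hgeom := (hasSum_geometric_of_lt_one (norm_nonneg q) hq).sub
    (hasSum_re (hasSum_geometric_of_norm_lt_one hq))
  simpa using (hasSum_nat_add_iff' 1).mpr hgeom

theorem norm_inv_eulerFunction_le {q : ℂ} (hq : ‖q‖ < 1) :
    ‖(eulerFunction q)⁻¹‖ ≤
      ‖(eulerFunction ‖q‖)⁻¹‖ * Real.exp (-((1 - ‖q‖)⁻¹ - (1 - q)⁻¹.re)) := by
  have hr : ‖(‖q‖ : ℂ)‖ < 1 := by simpa using hq
  have hexp := (Real.continuous_exp.tendsto _).comp (hasSum_norm_pow_sub_re_pow hq).tendsto_sum_nat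
  have hlower : ‖eulerFunction ‖q‖‖ * Real.exp ((1 - ‖q‖)⁻¹ - (1 - q)⁻¹.re) ≤
      ‖eulerFunction q‖ := by
    refine le_of_tendsto_of_tendsto' ((tendsto_prod_one_sub_pow hr).norm.mul hexp)
      (tendsto_prod_one_sub_pow hq).norm fun K => ?_
    simp only [Function.comp_apply, Real.exp_sum, norm_prod, ← Finset.prod_mul_distrib]
    refine Finset.prod_le_prod (fun _ _ => by positivity) fun i _ => ?_
    have hqi := norm_pow_succ_lt_one hq i
    rw [← ofReal_pow, ← norm_pow, norm_one_sub_ofReal hqi]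
    exact one_sub_norm_mul_exp_le hqi
  have hpos : 0 < ‖eulerFunction ‖q‖‖ := norm_pos_iff.mpr (eulerFunction_ne_zero hr)
  rw [norm_inv, norm_inv, Real.exp_neg, ← mul_inv]
  exact inv_anti₀ (by positivity) hlower

theorem inv_one_sub_sub_re_inv_one_sub {r θ : ℝ} (hr₀ : 0 ≤ r) (hr : r < 1) :
    (1 - r)⁻¹ - (1 - r * exp (θ * I))⁻¹.re =
      r * (1 - Real.cos θ) * (1 + r) /
        ((1 - r) * ((1 - r) ^ 2 + 2 * (r * (1 - Real.cos θ)))) := by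
  have hre : (1 - r * exp (θ * I)).re = 1 - r * Real.cos θ := by
    simp [exp_ofReal_mul_I_re]
  have him : (1 - r * exp (θ * I)).im = -(r * Real.sin θ) := by
    simp [exp_ofReal_mul_I_im]
  have hnormSq : normSq (1 - r * exp (θ * I)) = (1 - r) ^ 2 + 2 * (r * (1 - Real.cos θ)) := by
    rw [normSq_apply, hre, him]
    linear_combination r ^ 2 * Real.sin_sq_add_cos_sq θ
  have hden : (1 - r) ^ 2 + 2 * (r * (1 - Real.cos θ)) ≠ 0 := by
    have := mul_nonneg hr₀ (sub_nonneg.mpr (Real.cos_le_one θ))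
    have := pow_pos (sub_pos.mpr hr) 2
    positivity
  have hone : 1 - r ≠ 0 := by linarith
  rw [inv_re, hnormSq, hre, ← one_div, div_sub_div _ _ hone hden,
    div_eq_div_iff (mul_ne_zero hone hden) (mul_ne_zero hone hden)]
  ring

theorem pi_sq_le_ten : π ^ 2 ≤ 10 := by
  nlinarith [Real.pi_lt_d2, Real.pi_pos]

theorem sq_div_five_le_one_sub_cos {θ : ℝ} (hθ : |θ| ≤ π) : θ ^ 2 / 5 ≤ 1 - Real.cos θ := by
  have hcoeff : 1 / 5 ≤ 2 / π ^ 2 := by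
    rw [div_le_div_iff₀ (by norm_num) (by positivity)]
    linarith [pi_sq_le_ten]
  linarith [Real.cos_le_one_sub_mul_cos_sq hθ, mul_le_mul_of_nonneg_right hcoeff (sq_nonneg θ)]

theorem one_third_le_exp_neg {t : ℝ} (ht : t ≤ 1) : 1 / 3 ≤ Real.exp (-t) := by
  calc (1 / 3 : ℝ) ≤ (Real.exp 1)⁻¹ := by
        rw [one_div]; exact inv_anti₀ (Real.exp_pos 1) Real.exp_one_lt_three.le
    _ ≤ Real.exp (-t) := by rw [← Real.exp_neg]; gcongr

theorem min_sq_le_mul_inv_one_sub_sub_re {t θ : ℝ} (ht₀ : 0 < t) (ht : t ≤ 1) (hθ : |θ| ≤ π) :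
    min (θ ^ 2) (t ^ 2) ≤
      20 * t ^ 3 * ((1 - Real.exp (-t))⁻¹ - (1 - Real.exp (-t) * exp (θ * I))⁻¹.re) := by
  have hr : Real.exp (-t) < 1 := by simpa using ht₀
  rw [inv_one_sub_sub_re_inv_one_sub (Real.exp_pos _).le hr]
  have hthird := one_third_le_exp_neg ht
  have hlin : 1 - Real.exp (-t) ≤ t := by linarith [Real.add_one_le_exp (-t)]
  set r := Real.exp (-t)
  set m := min (θ ^ 2) (t ^ 2)
  have hm₀ : 0 ≤ m := by positivity
  have hmt : m ≤ t ^ 2 := min_le_right _ _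
  have hu : m / 15 ≤ r * (1 - Real.cos θ) := by
    have hcos := sq_div_five_le_one_sub_cos hθ
    calc m / 15 ≤ 1 / 3 * (θ ^ 2 / 5) := by linarith [min_le_left (θ ^ 2) (t ^ 2)]
      _ ≤ r * (1 - Real.cos θ) := by gcongr
  set u := r * (1 - Real.cos θ)
  have hu₀ : 0 ≤ u := le_trans (by positivity) hu
  have hmono : u / (t * (t ^ 2 + 2 * u)) ≤ u * (1 + r) / ((1 - r) * ((1 - r) ^ 2 + 2 * u)) := by
    have : 0 < 1 - r := by linarith
    refine div_le_div₀ (by positivity) (le_mul_of_one_le_right hu₀ (by linarith)) (by positivity) ?_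
    gcongr
  have hmain : m ≤ 20 * t ^ 3 * (u / (t * (t ^ 2 + 2 * u))) := by
    have hcancel : 20 * t ^ 3 * (u / (t * (t ^ 2 + 2 * u))) = 20 * t ^ 2 * u / (t ^ 2 + 2 * u) := by
      field_simp
    rw [hcancel, le_div_iff₀ (by positivity)]
    nlinarith [mul_le_mul_of_nonneg_right hmt hu₀, mul_le_mul_of_nonneg_left hu (sq_nonneg t)]
  exact hmain.trans (by gcongr)

theorem exp_neg_le_of_min_le {A B x w S : ℝ} (hA : 0 ≤ A) (hB : 0 < B) (hw : w ^ 2 ≤ A * x ^ 6)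
    (hS : min (w ^ 2) (x ^ 2) ≤ B * S) :
    Real.exp (-S) ≤ (1 + B + 6 * A * B ^ 3) * (1 + w ^ 2)⁻¹ := by
  have hS₀ : 0 ≤ S := nonneg_of_mul_nonneg_right (le_trans (by positivity) hS) hB
  rw [Real.exp_neg, ← div_eq_mul_inv, inv_le_comm₀ (Real.exp_pos _) (by positivity), inv_div,
    div_le_iff₀ (by positivity)]
  have hexp₁ := Real.add_one_le_exp S
  have hexp₃ : S ^ 3 ≤ 6 * Real.exp S := by
    have := Real.pow_div_factorial_le_exp S hS₀ 3
    norm_num [Nat.factorial] at this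
    linarith
  have hquad : w ^ 2 ≤ B * Real.exp S + 6 * A * B ^ 3 * Real.exp S := by
    rcases min_le_iff.mp hS with hsmall | hlarge
    · calc w ^ 2 ≤ B * S := hsmall
        _ ≤ B * Real.exp S := by gcongr; linarith
        _ ≤ _ := le_add_of_nonneg_right (by positivity)
    · calc w ^ 2 ≤ A * (x ^ 2) ^ 3 := by rwa [← pow_mul]
        _ ≤ A * (B * S) ^ 3 := by gcongr
        _ = A * B ^ 3 * S ^ 3 := by ring
        _ ≤ A * B ^ 3 * (6 * Real.exp S) := by gcongr
        _ = 6 * A * B ^ 3 * Real.exp S := by ring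
        _ ≤ _ := le_add_of_nonneg_left (by positivity)
  linarith

end EulerFunctionBound

section ModularTransformation

theorem sqrt_mul_of_arg_add_arg_mem {a b : ℂ} (ha : a ≠ 0) (hb : b ≠ 0)
    (h : arg a + arg b ∈ Set.Ioc (-π) π) : sqrt (a * b) = sqrt a * sqrt b := by
  rw [sqrt_eq_exp (mul_ne_zero ha hb), sqrt_eq_exp ha, sqrt_eq_exp hb, log_mul ha hb h, add_div,
    exp_add]

theorem sqrt_ofReal_mul {r : ℝ} (hr : 0 < r) {w : ℂ} (hw : w ≠ 0) :
    sqrt (r * w) = √r * sqrt w := by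
  rw [sqrt_mul_of_arg_add_arg_mem (ofReal_ne_zero.mpr hr.ne') hw
    (by simpa [arg_ofReal_of_nonneg hr.le] using arg_mem_Ioc w),
    Complex.sqrt_of_nonneg (by exact_mod_cast hr.le), ofReal_re]

theorem sqrt_I_mul {z : ℂ} (hz : 0 < z.re) : sqrt (I * z) = sqrt I * sqrt z := by
  have hz₀ : z ≠ 0 := by rintro rfl; simp at hz
  have harg := abs_lt.mp (abs_arg_lt_pi_div_two_iff.mpr (.inl hz))
  refine sqrt_mul_of_arg_add_arg_mem I_ne_zero hz₀ ?_
  rw [arg_I]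
  constructor <;> linarith [Real.pi_pos]

theorem norm_exp_neg_lt_one {z : ℂ} (hz : 0 < z.re) : ‖exp (-z)‖ < 1 := by
  simpa [norm_exp] using hz

theorem ofReal_div_re_pos {r : ℝ} (hr : 0 < r) {z : ℂ} (hz : 0 < z.re) : 0 < ((r : ℂ) / z).re := by
  have hz₀ : z ≠ 0 := by rintro rfl; simp at hz
  rw [div_eq_mul_inv, re_ofReal_mul, inv_re]
  have := normSq_pos.mpr hz₀
  positivity

theorem eta_I_mul_div_two_pi (z : ℂ) :
    ModularForm.eta (I * z / (2 * π)) = exp (-z / 24) * eulerFunction (exp (-z)) := by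
  have hπ : (π : ℂ) ≠ 0 := ofReal_ne_zero.mpr Real.pi_ne_zero
  have hparam (h : ℂ) : 2 * π * I * (I * z / (2 * π)) / h = -z / h := by
    field_simp
    rw [I_sq]
    ring
  rw [ModularForm.eta, Function.Periodic.qParam, eulerFunction]
  simp only [ModularForm.eta_q, Function.Periodic.qParam, hparam]
  simp

theorem inv_eulerFunction_exp_neg {z : ℂ} (hz : 0 < z.re) :
    (eulerFunction (exp (-z)))⁻¹ =
      sqrt (z / (2 * π)) * exp (-z / 24) * exp (π ^ 2 / (6 * z)) *
        (eulerFunction (exp (-(4 * π ^ 2 / z))))⁻¹ := by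
  have hz₀ : z ≠ 0 := by rintro rfl; simp at hz
  have hπ : (π : ℂ) ≠ 0 := ofReal_ne_zero.mpr Real.pi_ne_zero
  have hre : 0 < (z / (2 * π)).re := by
    rw [show z / (2 * π) = z / ((2 * π : ℝ) : ℂ) by push_cast; rfl, div_ofReal_re]
    positivity
  have hτ : 0 < (I * z / (2 * π)).im := by rwa [mul_div_assoc, I_mul_im]
  have hinv : -1 / (I * z / (2 * π)) = I * (4 * π ^ 2 / z) / (2 * π) := by
    field_simp
    rw [I_sq]
    ring
  have hsqrt : (sqrt I)⁻¹ * sqrt (I * z / (2 * π)) = sqrt (z / (2 * π)) := by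
    rw [mul_div_assoc, sqrt_I_mul hre, inv_mul_cancel_left₀]
    simp [sqrt]
  have hexp : exp (-(4 * π ^ 2 / z) / 24) = (exp (π ^ 2 / (6 * z)))⁻¹ := by
    rw [← exp_neg]
    congr 1
    field_simp
    norm_num
  have heta := ModularForm.eta_comp_eq_csqrt_I_inv hτ
  simp only [Function.comp_apply, Pi.smul_apply, Pi.mul_apply, smul_eq_mul, hinv,
    eta_I_mul_div_two_pi, hexp, ← mul_assoc, hsqrt] at heta
  have hφ := eulerFunction_ne_zero (norm_exp_neg_lt_one hz)
  have hdual : 0 < (4 * π ^ 2 / z).re := by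
    exact_mod_cast ofReal_div_re_pos (show (0 : ℝ) < 4 * π ^ 2 by positivity) hz
  have hφ' := eulerFunction_ne_zero (norm_exp_neg_lt_one hdual)
  rw [inv_mul_eq_iff_eq_mul₀ (exp_ne_zero _)] at heta
  rw [eq_mul_inv_iff_mul_eq₀ hφ', inv_mul_eq_iff_eq_mul₀ hφ, heta]
  ring

theorem tendsto_inv_eulerFunction_exp_neg {α : Type*} {l : Filter α} {f : α → ℂ}
    (hf : Tendsto (fun x => (f x).re) l atTop) :
    Tendsto (fun x => (eulerFunction (exp (-f x)))⁻¹) l (𝓝 1) := by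
  have hexp : Tendsto (fun x => exp (-f x)) l (𝓝 0) := by
    rw [tendsto_exp_nhds_zero_iff]
    simpa only [neg_re, tendsto_neg_atBot_iff] using hf
  have hφ := (continuousAt_eulerFunction (q := 0) (by simp)).tendsto.comp hexp
  rw [eulerFunction_zero] at hφ
  simpa using hφ.inv₀ one_ne_zero

end ModularTransformation

section Cauchy

theorem integral_exp_int_mul_I (k : ℤ) :
    ∫ θ in -π..π, exp (k * θ * I) = if k = 0 then 2 * (π : ℂ) else 0 := by
  split_ifs with hk
  · simp [hk]; ring
  · have hk₀ : (k : ℂ) * I ≠ 0 := mul_ne_zero (Int.cast_ne_zero.mpr hk) I_ne_zero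
    have hperiod : exp (k * I * (π : ℝ)) = exp (k * I * ((-π : ℝ) : ℂ)) := by
      rw [exp_eq_exp_iff_exists_int]
      exact ⟨k, by push_cast; ring⟩
    simp only [mul_right_comm _ _ I]
    rw [integral_exp_mul_complex hk₀, hperiod, sub_self, zero_div]

theorem integral_mul_exp_eq_coeff {a : ℕ → ℂ} {f : ℂ → ℂ} {t : ℝ}
    (ha : Summable fun m => ‖a m‖ * Real.exp (-t) ^ m)
    (hf : ∀ q : ℂ, ‖q‖ = Real.exp (-t) → HasSum (fun m => a m * q ^ m) (f q)) (n : ℕ) :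
    ∫ θ in -π..π, f (exp (-(t + θ * I))) * exp (n * (t + θ * I)) = 2 * π * a n := by
  have hnorm (θ : ℝ) : ‖exp (-(t + θ * I))‖ = Real.exp (-t) := by simp [norm_exp]
  have hsum := intervalIntegral.hasSum_integral_of_dominated_convergence
    (μ := volume) (a := -π) (b := π)
    (F := fun m θ => a m * exp (-(t + θ * I)) ^ m * exp (n * (t + θ * I)))
    (f := fun θ => f (exp (-(t + θ * I))) * exp (n * (t + θ * I)))
    (fun m _ => ‖a m‖ * Real.exp (-t) ^ m * Real.exp (n * t))
    (fun m => Continuous.aestronglyMeasurable (by fun_prop))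
    (fun m => .of_forall fun θ _ => by
      rw [norm_mul, norm_mul, norm_pow, hnorm, norm_exp]
      simp)
    (.of_forall fun θ _ => ha.mul_right _)
    intervalIntegrable_const
    (.of_forall fun θ _ => (hf _ (hnorm θ)).mul_right _)
  have hterm (m : ℕ) : ∫ θ in -π..π, a m * exp (-(t + θ * I)) ^ m * exp (n * (t + θ * I)) =
      if m = n then 2 * π * a n else 0 := by
    have hsplit (θ : ℝ) : a m * exp (-(t + θ * I)) ^ m * exp (n * (t + θ * I)) =
        a m * exp ((n - m) * t) * exp ((n - m : ℤ) * θ * I) := by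
      rw [← exp_nat_mul, mul_assoc, mul_assoc, ← exp_add, ← exp_add]
      push_cast
      ring_nf
    simp only [hsplit, intervalIntegral.integral_const_mul, integral_exp_int_mul_I, sub_eq_zero,
      Nat.cast_inj, eq_comm (a := n)]
    split_ifs with hmn
    · simp [hmn, mul_comm]
    · simp
  simp only [hterm] at hsum
  rw [← hsum.tsum_eq, tsum_ite_eq]

theorem integral_inv_eulerFunction_mul_exp (n : ℕ) {t : ℝ} (ht : 0 < t) :
    ∫ θ in -π..π, (eulerFunction (exp (-(t + θ * I))))⁻¹ * exp (n * (t + θ * I)) =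
      2 * π * p n := by
  have hlt : Real.exp (-t) < 1 := by simpa using ht
  exact integral_mul_exp_eq_coeff (f := fun q => (eulerFunction q)⁻¹)
    (by simpa using summable_p (Real.exp_pos _).le hlt) (fun q hq => hasSum_p (hq.trans_lt hlt)) n

end Cauchy

section SaddlePoint

/-- The constant `C` for which `C / √n` is the saddle point of `z ↦ π ^ 2 / (6 * z) + n * z`. -/
noncomputable def saddleConst : ℝ := π / √6

/-- The circle of the Cauchy integral for `p n`, in the coordinate `z = -log q` and divided by the
saddle point. Here `x` is the fourth root of `n`, and the angle on the circle is `C * w / x ^ 3`,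
the scale on which the integrand becomes Gaussian. -/
noncomputable def contourRatio (x w : ℝ) : ℂ := 1 + (w / x : ℝ) * I

/-- The circle of the Cauchy integral for `p n` in the coordinate `z = -log q`, for `n = x ^ 4`. -/
noncomputable def contour (x w : ℝ) : ℂ := (saddleConst / x ^ 2 : ℝ) * contourRatio x w

/-- The integrand of the Cauchy integral for `p n` with `n = x ^ 4`, normalized by the factor
`x * exp (-2 * C * √n)` so as to converge to a Gaussian. -/
noncomputable def saddleIntegrand (x w : ℝ) : ℂ :=
  (x * Real.exp (-(2 * saddleConst * x ^ 2)) : ℝ) *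
    ((eulerFunction (exp (-contour x w)))⁻¹ * exp ((x ^ 4 : ℝ) * contour x w))

theorem saddleConst_pos : 0 < saddleConst := by
  unfold saddleConst
  positivity

theorem saddleConst_ne_zero : saddleConst ≠ 0 := saddleConst_pos.ne'

theorem saddleConst_sq : saddleConst ^ 2 = π ^ 2 / 6 := by
  rw [saddleConst, div_pow, Real.sq_sqrt (by norm_num)]

theorem contourRatio_ne_zero (x w : ℝ) : contourRatio x w ≠ 0 := fun h => by
  simpa [contourRatio] using congrArg re h

theorem contour_eq {x : ℝ} (hx : x ≠ 0) (w : ℝ) :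
    contour x w = (saddleConst / x ^ 2 : ℝ) + (saddleConst / x ^ 3 * w : ℝ) * I := by
  have hx' : (x : ℂ) ≠ 0 := ofReal_ne_zero.mpr hx
  rw [contour, contourRatio]
  push_cast
  field_simp

theorem contour_re (x w : ℝ) : (contour x w).re = saddleConst / x ^ 2 := by
  rw [contour, re_ofReal_mul]
  simp [contourRatio]

theorem contour_re_pos {x : ℝ} (hx : x ≠ 0) (w : ℝ) : 0 < (contour x w).re := by
  rw [contour_re]
  have := saddleConst_pos
  positivity

theorem sqrt_contour_div_two_pi {x : ℝ} (hx : 0 < x) (w : ℝ) :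
    sqrt (contour x w / (2 * π)) =
      (√(saddleConst / (2 * π)) / x : ℝ) * sqrt (contourRatio x w) := by
  have hscale : contour x w / (2 * π) =
      (saddleConst / (2 * π) / x ^ 2 : ℝ) * contourRatio x w := by
    rw [contour]
    push_cast
    ring
  have := saddleConst_pos
  rw [hscale, sqrt_ofReal_mul (by positivity) (contourRatio_ne_zero x w),
    Real.sqrt_div' _ (by positivity), Real.sqrt_sq hx.le]

-- `π ^ 2 / (6 * z) + x ^ 4 * z` is `C * x ^ 2 * (u⁻¹ + u)` with `u = 1 + (w / x) * I`, and
-- `u⁻¹ + u - 2 = (u - 1) ^ 2 / u`.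
theorem contour_exponent {x : ℝ} (hx : x ≠ 0) (w : ℝ) :
    π ^ 2 / (6 * contour x w) + (x ^ 4 : ℝ) * contour x w + (-(2 * saddleConst * x ^ 2) : ℝ) =
      -(saddleConst * w ^ 2) / contourRatio x w := by
  have hC : (saddleConst : ℂ) ≠ 0 := ofReal_ne_zero.mpr saddleConst_ne_zero
  have hx' : (x : ℂ) ≠ 0 := ofReal_ne_zero.mpr hx
  have hu := contourRatio_ne_zero x w
  have hsq : (π : ℂ) ^ 2 = 6 * saddleConst ^ 2 := by
    exact_mod_cast show π ^ 2 = 6 * saddleConst ^ 2 by rw [saddleConst_sq]; ring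
  have hw : (w : ℂ) ^ 2 = -x ^ 2 * (contourRatio x w - 1) ^ 2 := by
    rw [contourRatio]
    push_cast
    field_simp
    linear_combination w ^ 2 * I_sq
  rw [hsq, hw, contour]
  push_cast
  field_simp
  ring

theorem saddleIntegrand_eq {x : ℝ} (hx : 0 < x) (w : ℝ) :
    saddleIntegrand x w =
      √(saddleConst / (2 * π)) * sqrt (contourRatio x w) * exp (-contour x w / 24) *
        exp (-(saddleConst * w ^ 2) / contourRatio x w) *
        (eulerFunction (exp (-(4 * π ^ 2 / contour x w))))⁻¹ := by
  have hx' : (x : ℂ) ≠ 0 := ofReal_ne_zero.mpr hx.ne'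
  rw [saddleIntegrand, inv_eulerFunction_exp_neg (contour_re_pos hx.ne' w),
    sqrt_contour_div_two_pi hx, ← contour_exponent hx.ne', exp_add, exp_add, ← ofReal_exp]
  push_cast
  field_simp

theorem tendsto_contourRatio (w : ℝ) : Tendsto (contourRatio · w) atTop (𝓝 1) := by
  have hdiv : Tendsto (fun x : ℝ => w / x) atTop (𝓝 0) := tendsto_const_nhds.div_atTop tendsto_id
  simpa [contourRatio] using (((continuous_ofReal.tendsto 0).comp hdiv).mul_const I).const_add 1

theorem tendsto_contour (w : ℝ) : Tendsto (contour · w) atTop (𝓝 0) := by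
  have hscale : Tendsto (fun x : ℝ => saddleConst / x ^ 2) atTop (𝓝 0) :=
    tendsto_const_nhds.div_atTop (tendsto_pow_atTop two_ne_zero)
  simpa [contour] using ((continuous_ofReal.tendsto 0).comp hscale).mul (tendsto_contourRatio w)

theorem tendsto_re_div_contour {r : ℝ} (hr : 0 < r) (w : ℝ) :
    Tendsto (fun x => ((r : ℂ) / contour x w).re) atTop atTop := by
  have hC := saddleConst_pos
  have hratio : Tendsto (fun x => (contourRatio x w)⁻¹.re) atTop (𝓝 1) := by
    simpa only [Function.comp_def, inv_one, one_re] using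
      (continuous_re.tendsto _).comp ((tendsto_contourRatio w).inv₀ one_ne_zero)
  have hscale : Tendsto (fun x : ℝ => r / saddleConst * x ^ 2) atTop atTop :=
    (tendsto_pow_atTop two_ne_zero).const_mul_atTop (by positivity)
  refine (hscale.atTop_mul_pos one_pos hratio).congr fun x => ?_
  rw [← re_ofReal_mul, contour]
  congr 1
  push_cast
  simp only [div_eq_mul_inv, mul_inv, inv_inv]
  ring

theorem tendsto_saddleIntegrand (w : ℝ) :
    Tendsto (saddleIntegrand · w) atTop
      (𝓝 (√(saddleConst / (2 * π)) * Real.exp (-saddleConst * w ^ 2) : ℝ)) := by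
  have hsqrt : Tendsto (fun x => sqrt (contourRatio x w)) atTop (𝓝 1) := by
    simpa [Function.comp_def] using
      (continuousAt_sqrt (z := 1) (by simp)).tendsto.comp (tendsto_contourRatio w)
  have hexp : Tendsto (fun x => exp (-contour x w / 24)) atTop (𝓝 1) := by
    simpa using ((tendsto_contour w).neg.div_const 24).cexp
  have hgauss : Tendsto (fun x => exp (-(saddleConst * w ^ 2) / contourRatio x w)) atTop
      (𝓝 (exp (-(saddleConst * w ^ 2)))) := by
    simpa using (tendsto_const_nhds.div (tendsto_contourRatio w) one_ne_zero).cexp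
  have hφ := tendsto_inv_eulerFunction_exp_neg
    (tendsto_re_div_contour (show 0 < 4 * π ^ 2 by positivity) w)
  have hprod := (((hsqrt.const_mul (√(saddleConst / (2 * π)) : ℂ)).mul hexp).mul hgauss).mul hφ
  simp only [mul_one] at hprod
  push_cast at hprod ⊢
  rw [neg_mul]
  refine hprod.congr' ?_
  filter_upwards [eventually_gt_atTop 0] with x hx
  rw [saddleIntegrand_eq hx]

theorem continuous_saddleIntegrand {x : ℝ} (hx : x ≠ 0) : Continuous (saddleIntegrand x) := by
  have hcontour : Continuous (contour x) := by
    unfold contour contourRatio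
    fun_prop
  have hlt (w : ℝ) := norm_exp_neg_lt_one (contour_re_pos hx w)
  have hφ : Continuous fun w => (eulerFunction (exp (-contour x w)))⁻¹ :=
    continuous_iff_continuousAt.mpr fun w =>
      ((continuousAt_eulerFunction (hlt w)).comp (f := fun w => exp (-contour x w))
        (by fun_prop)).inv₀ (eulerFunction_ne_zero (hlt w))
  unfold saddleIntegrand
  fun_prop

theorem norm_saddleIntegrand {x : ℝ} (hx : 0 ≤ x) (w : ℝ) :
    ‖saddleIntegrand x w‖ =
      x * Real.exp (-(2 * saddleConst * x ^ 2)) *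
        (‖(eulerFunction (exp (-contour x w)))⁻¹‖ * Real.exp (x ^ 4 * (saddleConst / x ^ 2))) := by
  rw [saddleIntegrand, norm_mul, norm_mul, norm_real, Real.norm_of_nonneg (by positivity),
    norm_exp ((x ^ 4 : ℝ) * _), re_ofReal_mul, contour_re]

theorem exp_neg_contour {x : ℝ} (hx : x ≠ 0) (w : ℝ) :
    exp (-contour x w) =
      Real.exp (-(saddleConst / x ^ 2)) * exp ((-(saddleConst / x ^ 3 * w) : ℝ) * I) := by
  rw [contour_eq hx, ofReal_exp, ← exp_add]
  push_cast
  ring_nf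

theorem min_sq_le_mul_inv_one_sub_sub_re_contour {x : ℝ} (hx : 0 < x) (hC : saddleConst ≤ x ^ 2)
    {w : ℝ} (hw : |w| ≤ π / saddleConst * x ^ 3) :
    min (w ^ 2) (x ^ 2) ≤ 20 * saddleConst *
      ((1 - ‖exp (-contour x w)‖)⁻¹ - (1 - exp (-contour x w))⁻¹.re) := by
  have hC₀ := saddleConst_pos
  have hangle : |-(saddleConst / x ^ 3 * w)| ≤ π := by
    rw [abs_neg, abs_mul, abs_of_pos (by positivity)]
    calc saddleConst / x ^ 3 * |w| ≤ saddleConst / x ^ 3 * (π / saddleConst * x ^ 3) := by gcongr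
      _ = π := by field_simp
  have hmin := min_sq_le_mul_inv_one_sub_sub_re (t := saddleConst / x ^ 2) (by positivity)
    ((div_le_one (by positivity)).mpr hC) hangle
  have hscale : min ((-(saddleConst / x ^ 3 * w)) ^ 2) ((saddleConst / x ^ 2) ^ 2) =
      (saddleConst / x ^ 3) ^ 2 * min (w ^ 2) (x ^ 2) := by
    rw [mul_min_of_nonneg _ _ (by positivity)]
    congr 1
    · ring
    · field_simp
  rw [norm_exp, neg_re, contour_re]
  rw [← exp_neg_contour hx.ne', hscale] at hmin
  refine le_of_mul_le_mul_left (hmin.trans_eq ?_)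
    (show 0 < (saddleConst / x ^ 3) ^ 2 by positivity)
  field_simp

theorem norm_saddleIntegrand_le {x : ℝ} (hx : 0 < x) (hC : saddleConst ≤ x ^ 2) {w : ℝ}
    (hw : |w| ≤ π / saddleConst * x ^ 3) :
    ‖saddleIntegrand x w‖ ≤ ‖saddleIntegrand x 0‖ *
      ((1 + 20 * saddleConst + 6 * (π / saddleConst) ^ 2 * (20 * saddleConst) ^ 3) *
        (1 + w ^ 2)⁻¹) := by
  have hC₀ := saddleConst_pos
  have hcenter : exp (-contour x 0) = ‖exp (-contour x w)‖ := by
    rw [norm_exp, neg_re, contour_re]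
    simp [exp_neg_contour hx.ne']
  have hsq : w ^ 2 ≤ (π / saddleConst) ^ 2 * x ^ 6 := by
    calc w ^ 2 = |w| ^ 2 := (sq_abs w).symm
      _ ≤ (π / saddleConst * x ^ 3) ^ 2 := by gcongr
      _ = (π / saddleConst) ^ 2 * x ^ 6 := by ring
  have hexp := exp_neg_le_of_min_le (by positivity) (by positivity) hsq
    (min_sq_le_mul_inv_one_sub_sub_re_contour hx hC hw)
  have hφ := (norm_inv_eulerFunction_le (norm_exp_neg_lt_one (contour_re_pos hx.ne' w))).trans
    (mul_le_mul_of_nonneg_left hexp (norm_nonneg _))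
  rw [norm_saddleIntegrand hx.le, norm_saddleIntegrand hx.le, hcenter, mul_assoc _ (_ * _) (_ * _),
    mul_right_comm (‖_‖)]
  gcongr

theorem exists_norm_saddleIntegrand_le :
    ∃ K, ∀ᶠ x in atTop, ∀ w, |w| ≤ π / saddleConst * x ^ 3 →
      ‖saddleIntegrand x w‖ ≤ K * (1 + w ^ 2)⁻¹ := by
  have hC₀ := saddleConst_pos
  obtain ⟨B, hB⟩ : ∃ B, ∀ᶠ x in atTop, ‖saddleIntegrand x 0‖ ≤ B :=
    (tendsto_saddleIntegrand 0).norm.isBoundedUnder_le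
  refine ⟨B * (1 + 20 * saddleConst + 6 * (π / saddleConst) ^ 2 * (20 * saddleConst) ^ 3), ?_⟩
  filter_upwards [eventually_gt_atTop 0, hB,
    (tendsto_pow_atTop two_ne_zero).eventually_ge_atTop saddleConst] with x hx hxB hxC w hw
  rw [mul_assoc]
  exact (norm_saddleIntegrand_le hx hxC hw).trans (by gcongr)

end SaddlePoint

section Asymptotic

theorem tendsto_intervalIntegral_of_dominated_convergence {E ι : Type*} [NormedAddCommGroup E]
    [NormedSpace ℝ E] {l : Filter ι} [l.IsCountablyGenerated] {F : ι → ℝ → E} {f : ℝ → E}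
    {b : ι → ℝ} {bound : ℝ → ℝ} (hb : Tendsto b l atTop)
    (hmeas : ∀ᶠ x in l, AEStronglyMeasurable (F x))
    (hbound : ∀ᶠ x in l, ∀ w, |w| ≤ b x → ‖F x w‖ ≤ bound w) (hint : Integrable bound)
    (hlim : ∀ w, Tendsto (F · w) l (𝓝 (f w))) :
    Tendsto (fun x => ∫ w in -b x..b x, F x w) l (𝓝 (∫ w, f w)) := by
  have hconv := tendsto_integral_filter_of_dominated_convergence (μ := volume) (l := l)
    (F := fun x => (Set.Ioc (-b x) (b x)).indicator (F x)) (f := f) (fun w => ‖bound w‖)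
    (hmeas.mono fun x hx => hx.indicator measurableSet_Ioc) ?_ hint.norm
    (.of_forall fun w => ?_)
  · refine hconv.congr' ?_
    filter_upwards [hb.eventually_ge_atTop 0] with x hx
    rw [integral_indicator measurableSet_Ioc, intervalIntegral.integral_of_le (by linarith)]
  · filter_upwards [hbound] with x hx
    refine .of_forall fun w => ?_
    by_cases hw : w ∈ Set.Ioc (-b x) (b x)
    · rw [Set.indicator_of_mem hw]
      exact (hx w (abs_le.mpr ⟨hw.1.le, hw.2⟩)).trans (Real.le_norm_self _)
    · rw [Set.indicator_of_notMem hw, norm_zero]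
      exact norm_nonneg _
  · refine (hlim w).congr' ?_
    filter_upwards [hb.eventually_gt_atTop |w|] with x hx
    rw [Set.indicator_of_mem (Set.mem_Ioc.mpr ⟨(abs_lt.mp hx).1, (abs_lt.mp hx).2.le⟩)]

theorem tendsto_integral_saddleIntegrand :
    Tendsto (fun x => ∫ w in -(π / saddleConst * x ^ 3)..π / saddleConst * x ^ 3,
      saddleIntegrand x w) atTop (𝓝 (√(1 / 2) : ℝ)) := by
  have hC := saddleConst_pos
  obtain ⟨K, hK⟩ := exists_norm_saddleIntegrand_le
  have hgauss : ∫ w : ℝ, ((√(saddleConst / (2 * π)) * Real.exp (-saddleConst * w ^ 2) : ℝ) : ℂ) =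
      (√(1 / 2) : ℝ) := by
    have hhalf : saddleConst / (2 * π) * (π / saddleConst) = 1 / 2 := by field_simp
    rw [integral_complex_ofReal, integral_const_mul, integral_gaussian,
      ← Real.sqrt_mul (by positivity), hhalf]
  rw [← hgauss]
  refine tendsto_intervalIntegral_of_dominated_convergence
    ((tendsto_pow_atTop three_ne_zero).const_mul_atTop (by positivity)) ?_
    hK (integrable_inv_one_add_sq.const_mul K) tendsto_saddleIntegrand
  filter_upwards [eventually_ne_atTop 0] with x hx
  exact (continuous_saddleIntegrand hx).aestronglyMeasurable

theorem integral_saddleIntegrand {n : ℕ} {x : ℝ} (hx : 0 < x) (hn : x ^ 4 = n) :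
    ∫ w in -(π / saddleConst * x ^ 3)..π / saddleConst * x ^ 3, saddleIntegrand x w =
      (2 * π / saddleConst * (p n * n * Real.exp (-(2 * saddleConst * x ^ 2))) : ℝ) := by
  have hC := saddleConst_pos
  have hcauchy := integral_inv_eulerFunction_mul_exp n (t := saddleConst / x ^ 2) (by positivity)
  have hsubst := intervalIntegral.integral_comp_mul_left
    (a := -(π / saddleConst * x ^ 3)) (b := π / saddleConst * x ^ 3) (fun θ : ℝ =>
      (eulerFunction (exp (-((saddleConst / x ^ 2 : ℝ) + θ * I))))⁻¹ *
        exp (n * ((saddleConst / x ^ 2 : ℝ) + θ * I)))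
    (c := saddleConst / x ^ 3) (by positivity)
  have hendpoint : saddleConst / x ^ 3 * (π / saddleConst * x ^ 3) = π := by field_simp
  rw [mul_neg, hendpoint, hcauchy] at hsubst
  simp only [saddleIntegrand, contour_eq hx.ne', hn, ofReal_natCast,
    intervalIntegral.integral_const_mul]
  rw [hsubst, real_smul, ← hn]
  have hx' : (x : ℂ) ≠ 0 := ofReal_ne_zero.mpr hx.ne'
  push_cast
  field_simp

theorem tendsto_p_mul_exp_neg :
    Tendsto (fun n : ℕ => p n * n * Real.exp (-(2 * saddleConst * √n))) atTop
      (𝓝 (saddleConst / (2 * π) * √(1 / 2))) := by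
  have hfourth : Tendsto (fun n : ℕ => √√(n : ℝ)) atTop atTop :=
    Real.tendsto_sqrt_atTop.comp (Real.tendsto_sqrt_atTop.comp tendsto_natCast_atTop_atTop)
  have hre := (continuous_re.tendsto _).comp (tendsto_integral_saddleIntegrand.comp hfourth)
  refine (hre.const_mul (saddleConst / (2 * π))).congr' ?_
  filter_upwards [eventually_gt_atTop 0] with n hn
  have hsq : √√(n : ℝ) ^ 2 = √n := Real.sq_sqrt (Real.sqrt_nonneg _)
  have hpow : √√(n : ℝ) ^ 4 = n := by
    rw [pow_mul _ 2 2, hsq, Real.sq_sqrt n.cast_nonneg]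
  have hC := saddleConst_pos
  rw [Function.comp_apply, Function.comp_apply, integral_saddleIntegrand (by positivity) hpow,
    ofReal_re, hsq]
  field_simp

theorem saddleConst_div_mul_sqrt_half : saddleConst / (2 * π) * √(1 / 2) = 1 / (4 * √3) := by
  rw [saddleConst, show (6 : ℝ) = 3 * 2 by norm_num, Real.sqrt_mul (by norm_num),
    Real.sqrt_div' _ (by norm_num), Real.sqrt_one]
  field_simp
  norm_num

theorem two_mul_saddleConst_mul_sqrt (n : ℝ) : 2 * saddleConst * √n = π * √(2 * n / 3) := by
  have hsq : 2 * n / 3 = (2 / √6) ^ 2 * n := by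
    rw [div_pow, Real.sq_sqrt (by norm_num)]
    ring
  rw [hsq, Real.sqrt_mul (by positivity), Real.sqrt_sq (by positivity), saddleConst]
  ring

end Asymptotic

/-- **Hardy–Ramanujan asymptotic for the partition function.**
As `n → ∞`, `p(n) ∼ e^{π√(2n/3)}/(4n√3)`; that is, the sequence
`p(n) · 4n√3 / exp(π·√(2n/3))` tends to `1`. -/
theorem hardy_ramanujan_partition_asymptotic :
    Filter.Tendsto
      (fun n : ℕ =>
        (p n : ℝ) * (4 * (n : ℝ) * Real.sqrt 3) / Real.exp (Real.pi * Real.sqrt (2 * (n : ℝ) / 3)))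
      Filter.atTop (nhds 1) := by
  have hlim := tendsto_p_mul_exp_neg.const_mul (4 * √3)
  rw [saddleConst_div_mul_sqrt_half, mul_one_div_cancel (by positivity)] at hlim
  refine hlim.congr fun n => ?_
  rw [two_mul_saddleConst_mul_sqrt, Real.exp_neg]
  ring
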